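/- arXiv:2102.04094 — 2 statements merged into one kernel-verified Lean document; each statement's English description precedes it below -/
import Mathlib

section
/- If n, a and r are integers with n = 2a + r, 3 ≤ a ≤ ⌊n/2⌋ and 2 ≤ r < a, then C(n;1,a) admits a 2-bounded independent broadcast of maximum cost, i.e., there is an independent broadcast f with σ(f) = β_b(C(n;1,a)) and f(v) ≤ 2 for every vertex v. -/
/-- The eccentricity of a vertex: maximum distance to any other vertex. -/
noncomputable def eccent {V : Type*} [Fintype V] (G : SimpleGraph V) (v : V) : ℕ :=
  Finset.univ.sup (fun u => G.dist v u)

/-- The diameter of a finite graph: maximum eccentricity. -/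
noncomputable def graphDiam {V : Type*} [Fintype V] (G : SimpleGraph V) : ℕ :=
  Finset.univ.sup (fun v => eccent G v)

/-- `f` is an independent broadcast on `G`. -/
def IsIndepBroadcast {V : Type*} [Fintype V] (G : SimpleGraph V) (f : V → ℕ) : Prop :=
  (∀ v, f v ≤ eccent G v) ∧
  ∀ u v : V, u ≠ v → 0 < f u → 0 < f v → max (f u) (f v) < G.dist u v

/-- The broadcast independence number: maximum cost of an independent broadcast. -/
noncomputable def betaB {V : Type*} [Fintype V] (G : SimpleGraph V) : ℕ :=
  sSup {k | ∃ f : V → ℕ, IsIndepBroadcast G f ∧ ∑ v, f v = k}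

/-- The independence number: maximum size of an independent set. -/
noncomputable def alphaNum {V : Type*} [Fintype V] (G : SimpleGraph V) : ℕ :=
  sSup {k | ∃ s : Finset V, (∀ u ∈ s, ∀ v ∈ s, ¬ G.Adj u v) ∧ s.card = k}

/-- The circulant graph `C(n;1,a)` on vertices `v_0,…,v_{n-1}` with edges
`v_i v_{i+1}` and `v_i v_{i+a}`, indices mod `n`. -/
def circulantGraph (n a : ℕ) : SimpleGraph (Fin n) :=
  SimpleGraph.fromRel (fun i j => (i.val + 1) % n = j.val ∨ (i.val + a) % n = j.val)

/-- In a connected graph, an independent broadcast can be replaced by a 2-bounded one of no smaller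
cost, as soon as every value `k ≥ 3` at `v` can be traded for `k` pairwise non-adjacent vertices
close enough to `v`. -/
theorem IsIndepBroadcast.exists_two_bounded {V : Type*} [Fintype V] {G : SimpleGraph V}
    (hG : G.Connected)
    (hball : ∀ v k, 3 ≤ k → k ≤ eccent G v → ∃ S : Finset V, k ≤ S.card ∧
      (∀ w ∈ S, G.dist v w ≤ (k - 1) / 2) ∧ ∀ w ∈ S, ∀ w' ∈ S, w ≠ w' → ¬ G.Adj w w')
    {f : V → ℕ} (hf : IsIndepBroadcast G f) :
    ∃ g : V → ℕ, IsIndepBroadcast G g ∧ ∑ v, f v ≤ ∑ v, g v ∧ ∀ v, g v ≤ 2 := by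
  classical
  obtain ⟨hecc, hind⟩ := hf
  have two_le_dist : ∀ {w w' : V}, w ≠ w' → ¬ G.Adj w w' → 2 ≤ G.dist w w' := by
    intro w w' hne hadj
    have h0 := hG.pos_dist_of_ne hne
    have h1 : G.dist w w' ≠ 1 := fun h => hadj (SimpleGraph.dist_eq_one_iff_adj.mp h)
    omega
  have dist_le_eccent : ∀ w w' : V, G.dist w w' ≤ eccent G w := fun w w' =>
    Finset.le_sup (f := fun u => G.dist w u) (Finset.mem_univ w')
  let c : V → ℕ := fun v => if f v ≤ 2 then f v else 1
  have key : ∀ v, ∃ S : Finset V, f v ≤ S.card * c v ∧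
      (∀ w ∈ S, 0 < f v) ∧
      (∀ w ∈ S, G.dist v w ≤ (f v - 1) / 2) ∧ (∀ w ∈ S, c v ≤ eccent G w) ∧
      ∀ w ∈ S, ∀ w' ∈ S, w ≠ w' → c v < G.dist w w' := by
    intro v
    rcases Nat.eq_zero_or_pos (f v) with h0 | hpos
    · exact ⟨∅, by simp [h0]⟩
    by_cases h2 : f v ≤ 2
    · refine ⟨{v}, by simp [c, h2], by simpa using hpos, by simp, ?_, ?_⟩
      · simpa [c, h2] using hecc v
      · intro w hw w' hw' hne
        rw [Finset.mem_singleton] at hw hw'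
        exact absurd (hw.trans hw'.symm) hne
    · obtain ⟨S, hcard, hdist, hadj⟩ := hball v (f v) (by omega) (hecc v)
      have hc : c v = 1 := by simp [c, h2]
      refine ⟨S, by simpa [hc] using hcard, fun _ _ => hpos, hdist, ?_, ?_⟩
      · intro w hw
        obtain ⟨w', hw', hne⟩ := Finset.exists_mem_ne (by omega : 1 < S.card) w
        have := two_le_dist hne.symm (hadj w hw w' hw' hne.symm)
        have := dist_le_eccent w w'
        omega
      · intro w hw w' hw' hne
        rw [hc]
        exact two_le_dist hne (hadj w hw w' hw' hne)
  choose S hcard hpos hdist hSecc hsep using key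
  have hc2 : ∀ v, c v ≤ 2 := by
    intro v
    by_cases h : f v ≤ 2 <;> simp [c, h]
  have cross : ∀ u v w w', u ≠ v → w ∈ S u → w' ∈ S v → max (c u) (c v) < G.dist w w' := by
    intro u v w w' huv hw hw'
    have h1 := hind u v huv (hpos u w hw) (hpos v w' hw')
    have h2 := hdist u w hw
    have h3 := hdist v w' hw'
    have h4 := hG.dist_triangle (u := u) (v := w) (w := v)
    have h5 := hG.dist_triangle (u := w) (v := w') (w := v)
    rw [SimpleGraph.dist_comm (u := w') (v := v)] at h5
    have h6 := hpos u w hw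
    have h7 := hpos v w' hw'
    simp only [c]
    split_ifs <;> omega
  let g : V → ℕ := fun w => ∑ v, if w ∈ S v then c v else 0
  have hg : ∀ v w, w ∈ S v → g w = c v := by
    intro v w hw
    have : g w = if w ∈ S v then c v else 0 := by
      refine Finset.sum_eq_single v (fun u _ hu => if_neg fun hwu => ?_) (by simp)
      have := cross u v w w hu hwu hw
      simp at this
    rw [this, if_pos hw]
  have hg0 : ∀ w, 0 < g w → ∃ v, w ∈ S v := by
    intro w hw
    by_contra! h
    simp [g, h] at hw
  refine ⟨g, ⟨fun w => ?_, fun w w' hne hw hw' => ?_⟩, ?_, fun w => ?_⟩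
  · rcases Nat.eq_zero_or_pos (g w) with h | h
    · omega
    · obtain ⟨v, hv⟩ := hg0 w h
      rw [hg v w hv]
      exact hSecc v w hv
  · obtain ⟨u, hu⟩ := hg0 w hw
    obtain ⟨v, hv⟩ := hg0 w' hw'
    rw [hg u w hu, hg v w' hv]
    by_cases huv : u = v
    · subst huv
      simpa using hsep u w hu w' hv hne
    · exact cross u v w w' huv hu hv
  · rw [Finset.sum_comm]
    refine Finset.sum_le_sum fun v _ => ?_
    simpa [Finset.sum_ite_mem] using hcard v
  · rcases Nat.eq_zero_or_pos (g w) with h | h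
    · omega
    · obtain ⟨v, hv⟩ := hg0 w h
      rw [hg v w hv]
      exact hc2 v

/-- The vertex of `C(n;1,a)` reached from `v` by adding the integer `z` to its index. -/
def Fin.shift {n : ℕ} (v : Fin n) (z : ℤ) : Fin n :=
  ⟨(((v.val : ℤ) + z) % n).toNat, by
    have hn : (0 : ℤ) < n := by have := v.isLt; omega
    have h1 := Int.emod_nonneg ((v.val : ℤ) + z) hn.ne'
    have h2 := Int.emod_lt_of_pos ((v.val : ℤ) + z) hn
    omega⟩

namespace Fin

variable {n : ℕ}

theorem coe_shift (v : Fin n) (z : ℤ) : ((v.shift z).val : ℤ) = ((v.val : ℤ) + z) % n := by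
  have hn : (n : ℤ) ≠ 0 := by have := v.isLt; omega
  exact Int.toNat_of_nonneg (Int.emod_nonneg _ hn)

theorem shift_eq_iff (v w : Fin n) (z : ℤ) :
    v.shift z = w ↔ (n : ℤ) ∣ (w.val : ℤ) - (v.val + z) := by
  have hw : ((w.val : ℤ)) % n = w.val := Int.emod_eq_of_lt (by omega) (by have := w.isLt; omega)
  rw [← Int.modEq_iff_dvd, Int.ModEq, hw, ← coe_shift, Fin.ext_iff]
  omega

theorem dvd_shift_sub (v : Fin n) (z : ℤ) : (n : ℤ) ∣ ((v.shift z).val : ℤ) - (v.val + z) :=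
  (shift_eq_iff v _ z).mp rfl

theorem shift_shift (v : Fin n) (z w : ℤ) : (v.shift z).shift w = v.shift (z + w) := by
  rw [shift_eq_iff]
  have h := Int.dvd_sub (dvd_shift_sub v (z + w)) (dvd_shift_sub v z)
  convert h using 1
  ring

theorem shift_sub (v w : Fin n) : v.shift ((w.val : ℤ) - v.val) = w := by
  rw [shift_eq_iff]
  simp

theorem shift_zero (v : Fin n) : v.shift 0 = v := by
  rw [shift_eq_iff]
  simp

theorem shift_add_mul (v : Fin n) (z q : ℤ) : v.shift (z + n * q) = v.shift z := by
  rw [shift_eq_iff]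
  have h := Int.dvd_sub (dvd_shift_sub v z) (dvd_mul_right (n : ℤ) q)
  convert h using 1
  ring

end Fin

namespace circulantGraph

variable {n a : ℕ}

theorem eq_shift_of_mod_eq {i j : Fin n} {s : ℕ} (h : (i.val + s) % n = j.val) :
    i.shift s = j := by
  apply Fin.ext
  have h1 := Fin.coe_shift i s
  have h2 : (((i.val + s) % n : ℕ) : ℤ) = ((i.val : ℤ) + s) % n := by push_cast; rfl
  omega

theorem mod_eq_of_eq_shift {i j : Fin n} {s : ℕ} (h : i.shift s = j) :
    (i.val + s) % n = j.val := by
  have h1 := Fin.coe_shift i s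
  have h2 : (((i.val + s) % n : ℕ) : ℤ) = ((i.val : ℤ) + s) % n := by push_cast; rfl
  rw [h] at h1
  omega

theorem adj_iff (i j : Fin n) : (circulantGraph n a).Adj i j ↔
    i ≠ j ∧ ((i.shift 1 = j ∨ i.shift a = j) ∨ (j.shift 1 = i ∨ j.shift a = i)) := by
  have key : ∀ (k l : Fin n) (s : ℕ), (k.val + s) % n = l.val ↔ k.shift s = l := fun _ _ _ =>
    ⟨eq_shift_of_mod_eq, mod_eq_of_eq_shift⟩
  simp only [circulantGraph, SimpleGraph.fromRel_adj, key, Nat.cast_one]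

/-- The integer offset `D` is neither a multiple of `n` nor the offset of an edge. -/
def IsFar (n a : ℕ) (D : ℤ) : Prop :=
  ∀ e : ℤ, (e = 0 ∨ e = 1 ∨ e = -1 ∨ e = a ∨ e = -a) → ¬ (n : ℤ) ∣ D + e

theorem IsFar.ne_and_not_adj {v : Fin n} {z w : ℤ} (h : IsFar n a (w - z)) :
    v.shift z ≠ v.shift w ∧ ¬ (circulantGraph n a).Adj (v.shift z) (v.shift w) := by
  have key : ∀ z' w' : ℤ, v.shift z' = v.shift w' → (n : ℤ) ∣ w' - z' := by
    intro z' w' heq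
    rw [Fin.shift_eq_iff] at heq
    have h := Int.dvd_sub heq (Fin.dvd_shift_sub v w')
    convert h using 1
    ring
  refine ⟨fun heq => h 0 (by simp) (by simpa using key _ _ heq), fun hadj => ?_⟩
  rw [adj_iff] at hadj
  simp only [Fin.shift_shift] at hadj
  rcases hadj.2 with (h1 | h1) | (h1 | h1)
  · exact h (-1) (by simp) (by convert key _ _ h1 using 1; ring)
  · exact h (-a) (by simp) (by convert key _ _ h1 using 1; ring)
  · exact h 1 (by simp) (by rw [← Int.dvd_neg]; convert key _ _ h1 using 1; ring)
  · exact h a (by simp) (by rw [← Int.dvd_neg]; convert key _ _ h1 using 1; ring)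

theorem eq_or_adj_shift {e : ℤ} (he : e = 1 ∨ e = -1 ∨ e = a ∨ e = -a) (u : Fin n) :
    u = u.shift e ∨ (circulantGraph n a).Adj u (u.shift e) := by
  by_cases h : u = u.shift e
  · exact Or.inl h
  · refine Or.inr ((adj_iff _ _).mpr ⟨h, ?_⟩)
    rcases he with rfl | rfl | rfl | rfl <;> simp [Fin.shift_shift, Fin.shift_zero]

theorem connected (hn : 0 < n) : (circulantGraph n a).Connected := by
  have step : ∀ (u : Fin n) (m : ℕ), (circulantGraph n a).Reachable u (u.shift m) := by
    intro u m
    induction m with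
    | zero => simp [Fin.shift_zero]
    | succ m ih =>
      refine ih.trans ?_
      have := eq_or_adj_shift (a := a) (Or.inl rfl) (u.shift m)
      rw [Fin.shift_shift] at this
      push_cast
      rcases this with h | h
      · rw [← h]
      · exact h.reachable
  have : Nonempty (Fin n) := ⟨⟨0, hn⟩⟩
  refine SimpleGraph.Connected.mk fun u w => ?_
  have h0 := step ⟨0, hn⟩
  have h1 : ∀ w : Fin n, (⟨0, hn⟩ : Fin n).shift (w.val : ℕ) = w := by
    intro w
    rw [Fin.shift_eq_iff]
    simp
  have hu := h0 u.val
  have hw := h0 w.val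
  rw [h1] at hu hw
  exact hu.symm.trans hw

theorem dist_shift_mul_le {e : ℤ} (he : e = 1 ∨ e = -1 ∨ e = a ∨ e = -a) (u : Fin n) (m : ℕ) :
    (circulantGraph n a).dist u (u.shift (m * e)) ≤ m := by
  have hG : (circulantGraph n a).Connected := connected (by have := u.isLt; omega)
  induction m with
  | zero => simp [Fin.shift_zero]
  | succ m ih =>
    have h1 := eq_or_adj_shift he (u.shift (m * e))
    have h2 : u.shift ((m + 1 : ℕ) * e) = (u.shift (m * e)).shift e := by
      rw [Fin.shift_shift]
      push_cast
      ring_nf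
    rw [h2]
    have h3 : (circulantGraph n a).dist (u.shift (m * e)) ((u.shift (m * e)).shift e) ≤ 1 := by
      rcases h1 with h | h
      · rw [← h]; simp
      · exact (SimpleGraph.dist_eq_one_iff_adj.mpr h).le
    have h4 := hG.dist_triangle (u := u) (v := u.shift (m * e)) (w := (u.shift (m * e)).shift e)
    omega

theorem dist_shift_le (u : Fin n) (x y : ℤ) :
    (circulantGraph n a).dist u (u.shift (x + y * a)) ≤ x.natAbs + y.natAbs := by
  have hG : (circulantGraph n a).Connected := connected (by have := u.isLt; omega)
  have hx : ∀ u : Fin n, (circulantGraph n a).dist u (u.shift x) ≤ x.natAbs := by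
    intro u
    rcases Int.natAbs_eq x with h | h
    · have := dist_shift_mul_le (a := a) (e := 1) (by simp) u x.natAbs
      rwa [mul_one, ← h] at this
    · have := dist_shift_mul_le (a := a) (e := -1) (by simp) u x.natAbs
      rwa [mul_neg_one, ← h] at this
  have hy : ∀ u : Fin n, (circulantGraph n a).dist u (u.shift (y * a)) ≤ y.natAbs := by
    intro u
    rcases Int.natAbs_eq y with h | h
    · have := dist_shift_mul_le (a := a) (e := a) (by simp) u y.natAbs
      rwa [← h] at this
    · have := dist_shift_mul_le (a := a) (e := -a) (by simp) u y.natAbs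
      rwa [mul_neg, ← neg_mul, ← h] at this
  have h1 := hx u
  have h2 := hy (u.shift x)
  rw [Fin.shift_shift] at h2
  have h3 := hG.dist_triangle (u := u) (v := u.shift x) (w := u.shift (x + y * a))
  omega

theorem eccent_le {r : ℕ} (hn : n = 2 * a + r) (hra : r < a) (u : Fin n) :
    eccent (circulantGraph n a) u ≤ (a + 1) / 2 := by
  refine Finset.sup_le fun w _ => ?_
  obtain ⟨z, hz0, hzn, hz⟩ : ∃ z : ℤ, 0 ≤ z ∧ z < n ∧ w = u.shift z := by
    have hu := u.isLt
    have hw := w.isLt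
    rcases le_total u.val w.val with h | h
    · exact ⟨(w.val : ℤ) - u.val, by omega, by omega, (Fin.shift_sub u w).symm⟩
    · rcases h.eq_or_lt with h' | h'
      · exact ⟨0, le_rfl, by omega, by rw [Fin.shift_zero]; exact Fin.ext h'⟩
      · refine ⟨(w.val : ℤ) - u.val + n * 1, by omega, by omega, ?_⟩
        rw [Fin.shift_add_mul, Fin.shift_sub]
  suffices h : ∃ x y q : ℤ, z = x + y * a + n * q ∧ x.natAbs + y.natAbs ≤ (a + 1) / 2 by
    obtain ⟨x, y, q, h1, h2⟩ := h
    rw [hz, h1, Fin.shift_add_mul]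
    exact (dist_shift_le u x y).trans h2
  by_cases h1 : z ≤ (a + 1) / 2
  · exact ⟨z, 0, 0, by ring, by omega⟩
  by_cases h2 : z ≤ a + r / 2
  · exact ⟨z - a, 1, 0, by ring, by omega⟩
  by_cases h3 : z < n - (a + 1) / 2
  · exact ⟨z - n + a, -1, 1, by ring, by omega⟩
  · exact ⟨z - n, 0, 1, by ring, by omega⟩

theorem eq_of_dvd_of_abs_lt {D N : ℤ} (h : N ∣ D) (h1 : -(2 * N) < D) (h2 : D < 2 * N) :
    D = 0 ∨ D = N ∨ D = -N := by
  obtain ⟨c, rfl⟩ := h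
  have hc1 : c < 2 := by nlinarith
  have hc2 : -2 < c := by nlinarith
  obtain rfl | rfl | rfl : c = -1 ∨ c = 0 ∨ c = 1 := by omega
  all_goals simp

/-- A family of offsets that are pairwise far apart yields an independent set of vertices. -/
theorem exists_indep_of_offsets {ι : Type*} [LinearOrder ι] (T : Finset ι) (z : ι → ℤ) (p : ℕ)
    (v : Fin n) (hdist : ∀ i ∈ T, (circulantGraph n a).dist v (v.shift (z i)) ≤ p)
    (hfar : ∀ i ∈ T, ∀ j ∈ T, i < j → IsFar n a (z j - z i)) :
    ∃ S : Finset (Fin n), S.card = T.card ∧ (∀ w ∈ S, (circulantGraph n a).dist v w ≤ p) ∧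
      ∀ w ∈ S, ∀ w' ∈ S, w ≠ w' → ¬ (circulantGraph n a).Adj w w' := by
  classical
  have hsep : ∀ i ∈ T, ∀ j ∈ T, i ≠ j → v.shift (z i) ≠ v.shift (z j) ∧
      ¬ (circulantGraph n a).Adj (v.shift (z i)) (v.shift (z j)) := by
    intro i hi j hj hij
    rcases lt_or_gt_of_ne hij with h | h
    · exact (hfar i hi j hj h).ne_and_not_adj
    · have := (hfar j hj i hi h).ne_and_not_adj (v := v)
      exact ⟨this.1.symm, fun hadj => this.2 hadj.symm⟩
  refine ⟨T.image fun i => v.shift (z i), Finset.card_image_of_injOn ?_, ?_, ?_⟩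
  · intro i hi j hj hij
    by_contra h
    exact (hsep i hi j hj h).1 hij
  · simpa using hdist
  · intro w hw w' hw' hne
    simp only [Finset.mem_image] at hw hw'
    obtain ⟨i, hi, rfl⟩ := hw
    obtain ⟨j, hj, rfl⟩ := hw'
    exact (hsep i hi j hj fun h => hne (by rw [h])).2

/-- When no short odd cycle meets the ball, two rows of the ball in checkerboard position and one
further vertex are independent. -/
theorem exists_indep_checkerboard {r p : ℕ} (hn : n = 2 * a + r) (hr : 2 ≤ r) (hra : r < a)
    (hp : 1 ≤ p) (hpa : 4 * p + 1 ≤ a) (hrp : r % 2 = 0 ∨ 2 * p ≤ r) (v : Fin n) :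
    ∃ S : Finset (Fin n), S.card = 2 * p + 2 ∧ (∀ w ∈ S, (circulantGraph n a).dist v w ≤ p) ∧
      ∀ w ∈ S, ∀ w' ∈ S, w ≠ w' → ¬ (circulantGraph n a).Adj w w' := by
  obtain ⟨q, hq⟩ : ∃ q : ℤ, (2 * p ≤ r ∧ q = -(p - 1)) ∨ (r < 2 * p ∧ q = p - 1) := by
    rcases le_or_gt (2 * p) r with h | h
    · exact ⟨_, Or.inl ⟨h, rfl⟩⟩
    · exact ⟨_, Or.inr ⟨h, rfl⟩⟩
  let x : ℕ → ℤ := fun j =>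
    if j ≤ p then 2 * j - p else if j ≤ 2 * p then 2 * j - 3 * p - 1 else q
  let y : ℕ → ℤ := fun j => if j ≤ p then 0 else if j ≤ 2 * p then 1 else -1
  have := exists_indep_of_offsets (a := a) (Finset.range (2 * p + 2)) (fun j => x j + y j * a) p v
    ?_ ?_
  · simpa using this
  · intro j hj
    rw [Finset.mem_range] at hj
    refine (dist_shift_le v (x j) (y j)).trans ?_
    simp only [x, y]
    split_ifs <;> omega
  · intro i hi j hj hij e he hdvd
    rw [Finset.mem_range] at hi hj
    simp only [x, y] at hdvd
    split_ifs at hdvd <;> try omega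
    all_goals
      have h := eq_of_dvd_of_abs_lt hdvd (by omega) (by omega)
      omega

/-- Every finite set of integers has a subset of density at least `(b+1)/(2b+3)` without differences
`2` and `2b+1`: average over the translates of `{0, 4, …, 4b}` in `ℤ/(2b+3)`. -/
theorem exists_dense_avoiding (b N : ℕ) (W : Finset ℤ) (hW : N * (2 * b + 3) < W.card * (b + 1)) :
    ∃ T ⊆ W, N + 1 ≤ T.card ∧ ∀ i ∈ T, ∀ j ∈ T, j - i ≠ 2 ∧ j - i ≠ 2 * b + 1 := by
  classical
  let R : Finset (ZMod (2 * b + 3)) :=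
    (Finset.range (b + 1)).image fun j : ℕ => ((4 * j : ℕ) : ZMod _)
  have hcop : ∀ c : ℤ, ((2 * b + 3 : ℕ) : ℤ) ∣ 2 * c → ((2 * b + 3 : ℕ) : ℤ) ∣ c := by
    intro c hc
    refine IsCoprime.dvd_of_dvd_mul_left ?_ hc
    exact ⟨1, -(b + 1), by push_cast; ring⟩
  have hsmall : ∀ c : ℤ, ((2 * b + 3 : ℕ) : ℤ) ∣ c → -(2 * b + 3) < c → c < 2 * b + 3 → c = 0 := by
    intro c hc h1 h2
    exact Int.eq_zero_of_abs_lt_dvd hc (by rw [abs_lt]; push_cast; constructor <;> linarith)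
  have hRcard : R.card = b + 1 := by
    rw [Finset.card_image_of_injOn, Finset.card_range]
    intro i hi j hj hij
    simp only [Finset.coe_range, Set.mem_Iio] at hi hj
    have h1 : (((4 * i : ℕ) : ℤ) : ZMod (2 * b + 3)) = ((4 * j : ℕ) : ℤ) := by exact_mod_cast hij
    rw [ZMod.intCast_eq_intCast_iff_dvd_sub] at h1
    have h2 := hcop (2 * ((j : ℤ) - i)) (by convert h1 using 1; push_cast; ring)
    have h3 := hsmall _ (hcop _ h2) (by omega) (by omega)
    omega
  have hRsep : ∀ s ∈ R, s + 2 ∉ R := by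
    intro s hs hs'
    simp only [R, Finset.mem_image, Finset.mem_range] at hs hs'
    obtain ⟨i, hi, rfl⟩ := hs
    obtain ⟨j, hj, hij⟩ := hs'
    have h1 : (((4 * j : ℕ) : ℤ) : ZMod (2 * b + 3)) = ((4 * i + 2 : ℕ) : ℤ) := by exact_mod_cast hij
    rw [ZMod.intCast_eq_intCast_iff_dvd_sub] at h1
    have h2 := hcop (2 * i + 1 - 2 * (j : ℤ)) (by convert h1 using 1; push_cast; ring)
    have h3 := hsmall _ h2 (by omega) (by omega)
    omega
  let T : ZMod (2 * b + 3) → Finset ℤ := fun c => W.filter fun t => (t : ZMod (2 * b + 3)) + c ∈ R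
  have hsum : ∑ c, (T c).card = W.card * (b + 1) := by
    simp only [T, Finset.card_filter]
    rw [Finset.sum_comm, Finset.sum_const_nat]
    intro t _
    rw [← Finset.card_filter, ← hRcard]
    refine Finset.card_bij (fun c _ => (t : ZMod (2 * b + 3)) + c) (by simp) (by simp) ?_
    intro s hs
    exact ⟨s - t, by simpa using hs, by ring⟩
  obtain ⟨c, hc⟩ : ∃ c, N < (T c).card := by
    by_contra! h
    have := Finset.sum_le_sum fun c (_ : c ∈ Finset.univ) => h c
    rw [hsum, Finset.sum_const, Finset.card_univ, ZMod.card, smul_eq_mul, mul_comm (2 * b + 3)] at this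
    omega
  refine ⟨T c, Finset.filter_subset _ _, hc, fun i hi j hj => ?_⟩
  have hi' := (Finset.mem_filter.mp hi).2
  have hj' := (Finset.mem_filter.mp hj).2
  refine ⟨fun h => ?_, fun h => ?_⟩
  · refine hRsep _ hi' ?_
    rw [show j = i + 2 by omega] at hj'
    convert hj' using 1
    push_cast
    ring
  · refine hRsep _ hj' ?_
    rw [show j = i + (2 * b + 1) by omega] at hj'
    have h0 : ((2 * b + 3 : ℕ) : ZMod (2 * b + 3)) = 0 := ZMod.natCast_self _
    push_cast at h0
    convert hi' using 1
    rw [show j = i + (2 * b + 1) by omega]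
    push_cast
    linear_combination h0

/-- The half-length excess `g` of an interval that is long enough for `exists_dense_avoiding` and
still lies in the ball of radius `p`. -/
theorem exists_radius (b p : ℕ) (hb : 1 ≤ b) (hbp : b + 1 ≤ p) :
    ∃ g : ℕ, 2 * p + 2 ≤ (2 * g + 1) * (b + 1) ∧ g ≤ p ∧
      ∀ j : ℕ, j ≤ g + 1 → j ≤ 2 ∨ j ≤ 2 * b - 1 ∨ (b + 1) * j ≤ 2 * p := by
  have hex : ∃ g : ℕ, 1 ≤ g ∧ 2 * p + 2 ≤ (2 * g + 1) * (b + 1) := ⟨p, by omega, by nlinarith⟩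
  classical
  obtain ⟨h1, h2⟩ := Nat.find_spec hex
  have hmin : 2 ≤ Nat.find hex → (2 * Nat.find hex - 1) * (b + 1) ≤ 2 * p + 1 := by
    intro h
    have := Nat.find_min hex (m := Nat.find hex - 1) (by omega)
    rw [not_and] at this
    have := this (by omega)
    rw [show 2 * (Nat.find hex - 1) + 1 = 2 * Nat.find hex - 1 by omega] at this
    omega
  generalize Nat.find hex = g at *
  rcases h1.eq_or_lt with rfl | hg
  · exact ⟨1, h2, by omega, fun j hj => by omega⟩
  obtain ⟨d, rfl⟩ : ∃ d, g = d + 2 := ⟨g - 2, by omega⟩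
  have hmin := hmin (by omega)
  rw [show 2 * (d + 2) - 1 = 2 * d + 3 by omega] at hmin
  refine ⟨d + 2, h2, by nlinarith, fun j hj => ?_⟩
  by_cases hj1 : j ≤ 2 * b - 1
  · exact Or.inr (Or.inl hj1)
  refine Or.inr (Or.inr ?_)
  rcases Nat.eq_zero_or_pos d with rfl | hd
  · obtain rfl : b = 1 := by omega
    omega
  · have : (b + 1) * j ≤ (b + 1) * (d + 3) := Nat.mul_le_mul_left _ hj
    nlinarith

/-- For odd `r = 2b+1` the graph is `C(n;2,r)`; the ball of radius `p` there contains an interval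
slightly longer than `[-2p,2p]`. -/
theorem exists_coords {b p g : ℕ} (hb : 1 ≤ b) (hbp : b + 1 ≤ p)
    (hg : ∀ j : ℕ, j ≤ g + 1 → j ≤ 2 ∨ j ≤ 2 * b - 1 ∨ (b + 1) * j ≤ 2 * p) (t : ℤ)
    (ht : t.natAbs ≤ 2 * p + 1 + g) :
    ∃ x y : ℤ, t = (2 * b + 1) * y + 2 * x ∧ x.natAbs + y.natAbs ≤ p := by
  suffices h : ∀ t : ℕ, t ≤ 2 * p + 1 + g →
      ∃ x y : ℤ, (t : ℤ) = (2 * b + 1) * y + 2 * x ∧ x.natAbs + y.natAbs ≤ p by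
    obtain ⟨x, y, h1, h2⟩ := h t.natAbs ht
    rcases Int.natAbs_eq t with h | h
    · exact ⟨x, y, by rw [h, h1], h2⟩
    · exact ⟨-x, -y, by rw [h, h1]; ring, by simpa using h2⟩
  intro t ht
  have small : t ≤ 2 * p + 2 ∨ t ≤ 2 * p + (2 * b - 1) →
      ∃ x y : ℤ, (t : ℤ) = (2 * b + 1) * y + 2 * x ∧ x.natAbs + y.natAbs ≤ p := by
    intro h
    rcases Nat.even_or_odd' t with ⟨c, hc | hc⟩
    · by_cases h' : t ≤ 2 * p
      · exact ⟨c, 0, by omega, by omega⟩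
      · exact ⟨(c : ℤ) - (2 * b + 1), 2, by rw [hc]; push_cast; ring, by omega⟩
    · exact ⟨(c : ℤ) - b, 1, by rw [hc]; push_cast; ring, by omega⟩
  by_cases h2 : t ≤ 2 * p + 2
  · exact small (Or.inl h2)
  obtain ⟨j, rfl⟩ : ∃ j, t = 2 * p + j := ⟨t - 2 * p, by omega⟩
  rcases hg j (by omega) with h | h | h
  · omega
  · exact small (Or.inr (by omega))
  · refine ⟨(p : ℤ) - b * j, j, by push_cast; ring, ?_⟩
    have hbj : (j : ℤ) ≤ b * j := by
      have : (1 : ℤ) ≤ b := by exact_mod_cast hb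
      nlinarith
    have h' : (b : ℤ) * j + j ≤ 2 * p := by
      have : ((b : ℤ) + 1) * j ≤ 2 * p := by exact_mod_cast h
      linarith
    generalize (b : ℤ) * j = m at *
    omega

theorem exists_indep_odd {b p : ℕ} (hn : n = 2 * a + (2 * b + 1)) (hb : 1 ≤ b)
    (hbp : b + 1 ≤ p) (hpa : 4 * p + 1 ≤ a) (v : Fin n) :
    ∃ S : Finset (Fin n), 2 * p + 2 ≤ S.card ∧ (∀ w ∈ S, (circulantGraph n a).dist v w ≤ p) ∧
      ∀ w ∈ S, ∀ w' ∈ S, w ≠ w' → ¬ (circulantGraph n a).Adj w w' := by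
  obtain ⟨g, hg1, hgp, hg2⟩ := exists_radius b p hb hbp
  obtain ⟨T, hTW, hTcard, hT⟩ := exists_dense_avoiding b (2 * p + 1)
    (Finset.Icc (-(2 * p + 1 + g : ℤ)) (2 * p + 1 + g)) (by
      rw [Int.card_Icc, show ((2 * p + 1 + g + 1 - -(2 * p + 1 + g) : ℤ)).toNat
        = 2 * (2 * p + 1) + (2 * g + 1) by omega]
      nlinarith)
  have hnz : (n : ℤ) = 2 * a + (2 * b + 1) := by rw [hn]; push_cast; ring
  have := exists_indep_of_offsets (a := a) T (fun t => t * (a + b + 1)) p v ?_ ?_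
  · obtain ⟨S, h1, h2⟩ := this
    exact ⟨S, by omega, h2⟩
  · intro t ht
    have ht' := Finset.mem_Icc.mp (hTW ht)
    obtain ⟨x, y, h1, h2⟩ := exists_coords hb hbp hg2 t (by omega)
    have h3 : t * (a + b + 1) = (x + (-y) * a) + n * (x + y * (b + 1)) := by
      rw [h1, hnz]; ring
    rw [h3, Fin.shift_add_mul]
    exact (dist_shift_le v x (-y)).trans (by simpa using h2)
  · intro i hi j hj hij e he hdvd
    have hi' := Finset.mem_Icc.mp (hTW hi)
    have hj' := Finset.mem_Icc.mp (hTW hj)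
    have hij1 := hT i hi j hj
    have h1 : (n : ℤ) ∣ (j - i) + 2 * e := by
      have h := Int.dvd_sub (hdvd.mul_left 2) (dvd_mul_right (n : ℤ) (j - i))
      convert h using 1
      rw [hnz]; ring
    have h := eq_of_dvd_of_abs_lt h1 (by omega) (by omega)
    omega

theorem exists_indep_in_ball {r : ℕ} (hn : n = 2 * a + r) (hr : 2 ≤ r) (hra : r < a)
    (v : Fin n) (k : ℕ) (hk : 3 ≤ k) (hkv : k ≤ eccent (circulantGraph n a) v) :
    ∃ S : Finset (Fin n), k ≤ S.card ∧
      (∀ w ∈ S, (circulantGraph n a).dist v w ≤ (k - 1) / 2) ∧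
      ∀ w ∈ S, ∀ w' ∈ S, w ≠ w' → ¬ (circulantGraph n a).Adj w w' := by
  have hecc := eccent_le hn hra v
  by_cases h : r % 2 = 0 ∨ 2 * ((k - 1) / 2) ≤ r
  · obtain ⟨S, h1, h2⟩ := exists_indep_checkerboard hn hr hra (p := (k - 1) / 2) (by omega)
      (by omega) h v
    exact ⟨S, by omega, h2⟩
  · obtain ⟨b, rfl⟩ : ∃ b, r = 2 * b + 1 := ⟨r / 2, by omega⟩
    obtain ⟨S, h1, h2⟩ := exists_indep_odd hn (p := (k - 1) / 2) (by omega) (by omega)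
      (by omega) v
    exact ⟨S, by omega, h2⟩

end circulantGraph

theorem bddAbove_broadcast_costs {V : Type*} [Fintype V] (G : SimpleGraph V) :
    BddAbove {k | ∃ f : V → ℕ, IsIndepBroadcast G f ∧ ∑ v, f v = k} := by
  refine ⟨∑ v, eccent G v, ?_⟩
  rintro _ ⟨f, hf, rfl⟩
  exact Finset.sum_le_sum fun v _ => hf.1 v

theorem exists_indepBroadcast_eq_betaB {V : Type*} [Fintype V] (G : SimpleGraph V) :
    ∃ f : V → ℕ, IsIndepBroadcast G f ∧ ∑ v, f v = betaB G :=
  Nat.sSup_mem (s := {k | ∃ f : V → ℕ, IsIndepBroadcast G f ∧ ∑ v, f v = k})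
    ⟨0, fun _ => 0, ⟨by simp, by simp⟩, by simp⟩ (bddAbove_broadcast_costs G)

theorem stmt7 (n a r : ℕ) (hn : n = 2 * a + r) (ha : 3 ≤ a) (han : a ≤ n / 2)
    (hr : 2 ≤ r) (hra : r < a) :
    ∃ f : Fin n → ℕ, IsIndepBroadcast (circulantGraph n a) f ∧
      (∑ v, f v) = betaB (circulantGraph n a) ∧ ∀ v, f v ≤ 2 := by
  obtain ⟨f, hf, hcost⟩ := exists_indepBroadcast_eq_betaB (circulantGraph n a)
  obtain ⟨g, hg, hle, hg2⟩ := hf.exists_two_bounded (circulantGraph.connected (by omega))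
    (circulantGraph.exists_indep_in_ball hn hr hra)
  refine ⟨g, hg, le_antisymm ?_ (hcost ▸ hle), hg2⟩
  exact le_csSup (bddAbove_broadcast_costs _) ⟨g, hg, rfl⟩
end

section
/- If a and k are integers with a ≥ 5 and k ≥ 2, then β_b(C((a+1)k;1,a)) = α(C((a+1)k;1,a)), and this common value equals ak/2 if a is even, and (a+1)k/2 if a is odd. -/
/-! ### Sums of periodic sequences -/

theorem sum_range_add_int_of_periodic {n : ℕ} {h : ℤ → ℕ} (hper : ∀ x, h (x + n) = h x) (e : ℤ) :
    ∑ i ∈ Finset.range n, h (i + e) = ∑ i ∈ Finset.range n, h i := by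
  have step : ∀ e : ℤ, ∑ i ∈ Finset.range n, h (i + (e + 1)) = ∑ i ∈ Finset.range n, h (i + e) := by
    intro e
    have h1 := Finset.sum_range_succ (fun i : ℕ => h (i + e)) n
    have h2 := Finset.sum_range_succ' (fun i : ℕ => h (i + e)) n
    have h3 : h ((n : ℤ) + e) = h e := by rw [add_comm, hper]
    have h4 : ∀ i : ℕ, h (((i + 1 : ℕ) : ℤ) + e) = h (i + (e + 1)) := by
      intro i; congr 1; push_cast; ring
    simp only [h3, h4, Nat.cast_zero, zero_add] at h1 h2
    omega
  induction e using Int.induction_on with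
  | zero => simp
  | succ i ih => rw [step, ih]
  | pred i ih =>
    rw [← ih, ← step]
    simp

theorem sum_range_le_of_pair_le {s : ℕ → ℕ} {c : ℕ} (h : ∀ i, s i + s (i + 1) ≤ c) (j m : ℕ) :
    ∑ i ∈ Finset.range (2 * m), s (i + j) ≤ c * m := by
  induction m with
  | zero => simp
  | succ m ih =>
    rw [show 2 * (m + 1) = 2 * m + 1 + 1 by ring, Finset.sum_range_succ, Finset.sum_range_succ,
      Nat.mul_succ]
    have := h (2 * m + j)
    rw [show 2 * m + 1 + j = 2 * m + j + 1 by ring]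
    omega

/-- A weight bound along a cycle of length `N`, where a weight `3` forces its successor to vanish
and a weight `2` is surrounded by small weights. -/
theorem sum_range_le_of_cyclic_weights {N : ℕ} (hN : 5 ≤ N) {s : ℕ → ℕ}
    (hper : ∀ i, s (i + N) = s i)
    (hpair : ∀ i, s i + s (i + 1) ≤ 3) (hthree : ∀ i, s i = 3 → s (i + 1) = 0)
    (htwo : ∀ i, s (i + 2) = 2 → s i + s (i + 1) + s (i + 3) + s (i + 4) ≤ 4) :
    ∑ i ∈ Finset.range N, s i ≤ 3 * (N / 2) := by
  have rot : ∀ j : ℕ, ∑ i ∈ Finset.range N, s (i + j) = ∑ i ∈ Finset.range N, s i := by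
    intro j
    induction j with
    | zero => simp
    | succ j ih =>
      rw [← ih]
      have h1 := Finset.sum_range_succ (fun i : ℕ => s (i + j)) N
      have h2 := Finset.sum_range_succ' (fun i : ℕ => s (i + j)) N
      have h3 : s (N + j) = s j := by rw [add_comm, hper]
      have h4 : ∀ i : ℕ, s (i + 1 + j) = s (i + (j + 1)) := fun i => by congr 1; ring
      simp only [h3, h4, zero_add] at h1 h2
      omega
  rcases Nat.even_or_odd' N with ⟨m, hm | hm⟩
  · have := sum_range_le_of_pair_le hpair 0 m
    rw [← hm] at this
    simp only [add_zero] at this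
    have : N / 2 = m := by omega
    rwa [this]
  have hdiv : N / 2 = m := by omega
  rw [hdiv]
  by_cases h0 : ∃ j, s j = 0
  · obtain ⟨j, hj⟩ := h0
    rw [← rot j, hm, Finset.sum_range_succ']
    have := sum_range_le_of_pair_le hpair (j + 1) m
    simp only [zero_add, hj, add_zero]
    simpa only [add_assoc, add_comm 1 j] using this
  by_cases h2 : ∃ j, s j = 2
  · obtain ⟨j, hj⟩ := h2
    have hj' : s (j + (N - 2) + 2) = 2 := by
      rw [show j + (N - 2) + 2 = j + N by omega, hper, hj]
    have h5 := htwo _ hj'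
    rw [← rot (j + (N - 2))]
    have hrest := sum_range_le_of_pair_le hpair (j + (N - 2) + 5) (m - 2)
    have hN' : N = 5 + 2 * (m - 2) := by omega
    rw [show Finset.range N = Finset.range (5 + 2 * (m - 2)) by rw [← hN'],
      Finset.sum_range_add]
    have e : ∀ i, s (5 + i + (j + (N - 2))) = s (i + (j + (N - 2) + 5)) := fun i => by
      congr 1; ring
    simp only [e, Finset.sum_range_succ, Finset.sum_range_zero]
    have e0 : ∀ c, s (c + (j + (N - 2))) = s (j + (N - 2) + c) := fun c => by rw [add_comm]
    simp only [e0, add_zero]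
    omega
  · have hle : ∀ i ∈ Finset.range N, s i ≤ 1 := by
      intro i _
      have := hpair i
      have h3 := hthree i
      by_contra hc
      rcases (by omega : s i = 2 ∨ s i = 3) with h | h
      · exact h2 ⟨i, h⟩
      · exact h0 ⟨i + 1, h3 h⟩
    have : ∑ i ∈ Finset.range N, s i ≤ N := by
      simpa using Finset.sum_le_card_nsmul _ _ _ hle
    omega

/-! ### Broadcasts with values at most two, in coordinates -/

/-- The four steps `±1, ±a` of the circulant graph. -/
def circSteps (a : ℕ) : Finset ℤ := {1, -1, (a : ℤ), -(a : ℤ)}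

theorem mem_circSteps {a : ℕ} {e : ℤ} :
    e ∈ circSteps a ↔ e = 1 ∨ e = -1 ∨ e = a ∨ e = -a := by
  simp [circSteps]

theorem neg_mem_circSteps {a : ℕ} {e : ℤ} (he : e ∈ circSteps a) : -e ∈ circSteps a := by
  rw [mem_circSteps] at *
  omega

theorem card_circSteps {a : ℕ} (ha : 2 ≤ a) : (circSteps a).card = 4 := by
  unfold circSteps
  rw [Finset.card_insert_of_notMem, Finset.card_insert_of_notMem, Finset.card_insert_of_notMem,
    Finset.card_singleton] <;> simp <;> omega

/-- The number of neighbours of value two. -/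
def twoNbrs (a : ℕ) (g : ℤ → ℕ) (x : ℤ) : ℕ := ((circSteps a).filter fun e => g (x + e) = 2).card

/-- A vertex of value one has weight three; a vertex of value two has weight two and
gives weight one to each of its neighbours. -/
def spreadWeight (a : ℕ) (g : ℤ → ℕ) (x : ℤ) : ℕ :=
  (if g x = 1 then 3 else 0) + (if g x = 2 then 2 else 0) + twoNbrs a g x

theorem sum_spreadWeight {a n : ℕ} (ha : 2 ≤ a) {g : ℤ → ℕ} (hper : ∀ x, g (x + n) = g x)
    (hle : ∀ x, g x ≤ 2) :
    ∑ i ∈ Finset.range n, spreadWeight a g i = 3 * ∑ i ∈ Finset.range n, g i := by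
  have h2 : ∑ i ∈ Finset.range n, twoNbrs a g i
      = 4 * ∑ i ∈ Finset.range n, if g i = 2 then 1 else 0 := by
    simp only [twoNbrs, Finset.card_filter]
    rw [Finset.sum_comm]
    have : ∀ e ∈ circSteps a, (∑ i ∈ Finset.range n, if g (i + e) = 2 then 1 else 0)
        = ∑ i ∈ Finset.range n, if g i = 2 then 1 else 0 := fun e _ =>
      sum_range_add_int_of_periodic (h := fun x => if g x = 2 then 1 else 0)
        (fun x => by simp only [hper]) e
    rw [Finset.sum_congr rfl this, Finset.sum_const, card_circSteps ha, smul_eq_mul]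
  simp only [spreadWeight]
  rw [Finset.sum_add_distrib, h2, Finset.mul_sum, ← Finset.sum_add_distrib, Finset.mul_sum]
  refine Finset.sum_congr rfl fun i _ => ?_
  have := hle i
  split_ifs <;> omega

section SpreadWeight

variable {a : ℕ} {g : ℤ → ℕ}

theorem twoNbrs_le_one
    (htwo : ∀ x, ∀ e ∈ circSteps a, ∀ e' ∈ circSteps a, e + e' ≠ 0 → g x = 2 → g (x + e + e') = 0)
    (x : ℤ) : twoNbrs a g x ≤ 1 := by
  refine Finset.card_le_one.2 fun e he e' he' => ?_
  rw [Finset.mem_filter] at he he'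
  by_contra hne
  have := htwo (x + e) (-e) (neg_mem_circSteps he.1) e' he'.1 (by omega) he.2
  rw [add_neg_cancel_right] at this
  omega

theorem twoNbrs_eq_zero
    (hadj : ∀ x, ∀ e ∈ circSteps a, 0 < g x → g (x + e) = 0) {x : ℤ} (hx : 0 < g x) :
    twoNbrs a g x = 0 := by
  rw [twoNbrs, Finset.card_eq_zero, Finset.filter_eq_empty_iff]
  intro e he
  rw [hadj x e he hx]
  omega

theorem spreadWeight_of_eq_one
    (hadj : ∀ x, ∀ e ∈ circSteps a, 0 < g x → g (x + e) = 0) {x : ℤ} (hx : g x = 1) :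
    spreadWeight a g x = 3 := by
  simp [spreadWeight, hx, twoNbrs_eq_zero hadj (by omega : 0 < g x)]

theorem spreadWeight_of_eq_two
    (hadj : ∀ x, ∀ e ∈ circSteps a, 0 < g x → g (x + e) = 0) {x : ℤ} (hx : g x = 2) :
    spreadWeight a g x = 2 := by
  simp [spreadWeight, hx, twoNbrs_eq_zero hadj (by omega : 0 < g x)]

theorem spreadWeight_of_eq_zero
    (htwo : ∀ x, ∀ e ∈ circSteps a, ∀ e' ∈ circSteps a, e + e' ≠ 0 → g x = 2 → g (x + e + e') = 0)
    {x : ℤ} (hx : g x = 0) : spreadWeight a g x ≤ 1 := by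
  simpa [spreadWeight, hx] using twoNbrs_le_one htwo x

theorem spreadWeight_add_step_of_eq_one
    (hadj : ∀ x, ∀ e ∈ circSteps a, 0 < g x → g (x + e) = 0)
    (htwo : ∀ x, ∀ e ∈ circSteps a, ∀ e' ∈ circSteps a, e + e' ≠ 0 → g x = 2 → g (x + e + e') = 0)
    {x e : ℤ} (he : e ∈ circSteps a) (hx : g x = 1) : spreadWeight a g (x + e) = 0 := by
  have h0 := hadj x e he (by omega)
  suffices twoNbrs a g (x + e) = 0 by simp [spreadWeight, h0, this]
  rw [twoNbrs, Finset.card_eq_zero, Finset.filter_eq_empty_iff]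
  intro e' he' h
  by_cases hs : e + e' = 0
  · rw [add_assoc, hs, add_zero] at h
    omega
  · have := htwo (x + e + e') (-e') (neg_mem_circSteps he') (-e) (neg_mem_circSteps he)
      (by omega) h
    rw [add_neg_cancel_right, add_neg_cancel_right] at this
    omega

theorem sum_window_le (ha : 5 ≤ a) (hle : ∀ x, g x ≤ 2)
    (hadj : ∀ x, ∀ e ∈ circSteps a, 0 < g x → g (x + e) = 0)
    (htwo : ∀ x, ∀ e ∈ circSteps a, ∀ e' ∈ circSteps a, e + e' ≠ 0 → g x = 2 → g (x + e + e') = 0)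
    (b : ℤ) :
    ∑ i ∈ Finset.range (a + 1), spreadWeight a g (b + i) ≤ 3 * ((a + 1) / 2) := by
  have tri : ∀ x, g x = 0 ∨ g x = 1 ∨ g x = 2 := fun x => by have := hle x; omega
  have step : ∀ i : ℕ, ∃ e : ℤ, (e = 1 ∨ e = -a) ∧
      b + ((i + 1) % (a + 1) : ℕ) = b + (i % (a + 1) : ℕ) + e := by
    intro i
    rcases Nat.lt_or_ge (i % (a + 1) + 1) (a + 1) with h | h
    · refine ⟨1, Or.inl rfl, ?_⟩
      rw [Nat.add_mod, Nat.mod_eq_of_lt (by omega : 1 < a + 1), Nat.mod_eq_of_lt h]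
      push_cast
      ring
    · refine ⟨-a, Or.inr rfl, ?_⟩
      have hlt := Nat.mod_lt i (by omega : 0 < a + 1)
      have hi : i % (a + 1) = a := by omega
      rw [Nat.add_mod, Nat.mod_eq_of_lt (by omega : 1 < a + 1), hi, Nat.mod_self]
      push_cast
      ring
  have mem : ∀ {e : ℤ}, (e = 1 ∨ e = -a) → e ∈ circSteps a := fun h => by
    rw [mem_circSteps]; omega
  have key := sum_range_le_of_cyclic_weights (N := a + 1) (by omega)
    (s := fun i => spreadWeight a g (b + (i % (a + 1) : ℕ))) (fun i => by simp) ?_ ?_ ?_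
  · refine le_trans (le_of_eq (Finset.sum_congr rfl fun i hi => ?_)) key
    rw [Nat.mod_eq_of_lt (Finset.mem_range.1 hi)]
  · intro i
    obtain ⟨e, he, hx⟩ := step i
    simp only [hx]
    set x := b + ((i % (a + 1) : ℕ) : ℤ)
    rcases tri x with h | h | h
    · have h1 := spreadWeight_of_eq_zero htwo h
      rcases tri (x + e) with h' | h' | h'
      · have := spreadWeight_of_eq_zero htwo h'
        omega
      · have := spreadWeight_add_step_of_eq_one hadj htwo (neg_mem_circSteps (mem he)) h'
        rw [add_neg_cancel_right] at this
        have := spreadWeight_of_eq_one hadj h'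
        omega
      · have := spreadWeight_of_eq_two hadj h'
        omega
    · have := spreadWeight_add_step_of_eq_one hadj htwo (mem he) h
      have := spreadWeight_of_eq_one hadj h
      omega
    · have := spreadWeight_of_eq_two hadj h
      have := spreadWeight_of_eq_zero htwo (hadj x e (mem he) (by omega))
      omega
  · intro i
    obtain ⟨e, he, hx⟩ := step i
    simp only [hx]
    set x := b + ((i % (a + 1) : ℕ) : ℤ)
    intro h3
    rcases tri x with h | h | h
    · have h1 := spreadWeight_of_eq_zero htwo h
      omega
    · exact spreadWeight_add_step_of_eq_one hadj htwo (mem he) h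
    · have := spreadWeight_of_eq_two hadj h
      omega
  · intro i
    obtain ⟨e1, he1, hx1⟩ := step i
    obtain ⟨e2, he2, hx2⟩ := step (i + 1)
    obtain ⟨e3, he3, hx3⟩ := step (i + 2)
    obtain ⟨e4, he4, hx4⟩ := step (i + 3)
    rw [show i + 1 + 1 = i + 2 by ring] at hx2
    rw [show i + 2 + 1 = i + 3 by ring] at hx3
    rw [show i + 3 + 1 = i + 4 by ring] at hx4
    simp only [hx4, hx3]
    set y := b + (((i + 2) % (a + 1) : ℕ) : ℤ)
    have hy1 : b + (((i + 1) % (a + 1) : ℕ) : ℤ) = y + -e2 := by omega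
    have hy0 : b + ((i % (a + 1) : ℕ) : ℤ) = y + -e2 + -e1 := by omega
    rw [hy1, hy0]
    intro hw
    have hg : g y = 2 := by
      rcases tri y with h | h | h
      · have h1 := spreadWeight_of_eq_zero htwo h
        omega
      · have := spreadWeight_of_eq_one hadj h
        omega
      · exact h
    have w1 := spreadWeight_of_eq_zero htwo (hadj y _ (neg_mem_circSteps (mem he2)) (by omega))
    have w2 := spreadWeight_of_eq_zero htwo (hadj y _ (mem he3) (by omega))
    have w3 := spreadWeight_of_eq_zero htwo (htwo y _ (neg_mem_circSteps (mem he2)) _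
      (neg_mem_circSteps (mem he1)) (by omega) hg)
    have w4 := spreadWeight_of_eq_zero htwo (htwo y _ (mem he3) _ (mem he4) (by omega) hg)
    omega

theorem sum_range_le_of_value_le_two (ha : 5 ≤ a) (k : ℕ)
    (hper : ∀ x, g (x + ((a + 1) * k : ℕ)) = g x) (hle : ∀ x, g x ≤ 2)
    (hadj : ∀ x, ∀ e ∈ circSteps a, 0 < g x → g (x + e) = 0)
    (htwo : ∀ x, ∀ e ∈ circSteps a, ∀ e' ∈ circSteps a, e + e' ≠ 0 → g x = 2 →
      g (x + e + e') = 0) :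
    ∑ i ∈ Finset.range ((a + 1) * k), g i ≤ (a + 1) / 2 * k := by
  have hw : ∀ m : ℕ, ∑ i ∈ Finset.range ((a + 1) * m), spreadWeight a g i
      ≤ 3 * ((a + 1) / 2) * m := by
    intro m
    induction m with
    | zero => simp
    | succ m ih =>
      rw [Nat.mul_succ, Finset.sum_range_add, Nat.mul_succ]
      refine Nat.add_le_add ih ?_
      simpa using sum_window_le ha hle hadj htwo (((a + 1) * m : ℕ) : ℤ)
  have h1 := hw k
  rw [sum_spreadWeight (by omega) hper hle, mul_assoc] at h1
  omega

end SpreadWeight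

/-! ### The circulant graph in integer coordinates -/

section Circulant

variable {a k : ℕ}

/-- The vertex of `C(n;1,a)` with index congruent to `z`. -/
def vtx {n : ℕ} (hn : 0 < n) (z : ℤ) : Fin n :=
  ⟨(z % n).toNat, by
    have := Int.emod_lt_of_pos z (by exact_mod_cast hn : (0 : ℤ) < n)
    omega⟩

theorem vtx_val {n : ℕ} (hn : 0 < n) (z : ℤ) : ((vtx hn z).val : ℤ) = z % n :=
  Int.toNat_of_nonneg (Int.emod_nonneg z (by omega))

theorem vtx_eq_iff {n : ℕ} (hn : 0 < n) {x y : ℤ} : vtx hn x = vtx hn y ↔ (n : ℤ) ∣ x - y := by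
  rw [Fin.ext_iff, ← Int.natCast_inj, vtx_val, vtx_val]
  exact ⟨fun h => Int.ModEq.dvd (Eq.symm h), fun h => (Int.modEq_of_dvd h).symm⟩

theorem vtx_natCast {n : ℕ} (hn : 0 < n) (i : Fin n) : vtx hn (i.val : ℤ) = i := by
  rw [Fin.ext_iff, ← Int.natCast_inj, vtx_val]
  exact Int.emod_eq_of_lt (by omega) (by exact_mod_cast i.isLt)

theorem vtx_add_period {n : ℕ} (hn : 0 < n) (x : ℤ) : vtx hn (x + n) = vtx hn x := by
  rw [vtx_eq_iff]; simp

theorem vtx_val_add_mod_iff {n : ℕ} (hn : 0 < n) (x y : ℤ) (c : ℕ) :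
    ((vtx hn x).val + c) % n = (vtx hn y).val ↔ (n : ℤ) ∣ x + c - y := by
  rw [← vtx_eq_iff hn, Fin.ext_iff, ← Int.natCast_inj, ← Int.natCast_inj (m := (vtx hn (x + c)).val)]
  push_cast
  rw [vtx_val, vtx_val, vtx_val, Int.emod_add_emod]

theorem circulantGraph_adj_vtx {n : ℕ} (hn : 0 < n) (x y : ℤ) :
    (circulantGraph n a).Adj (vtx hn x) (vtx hn y) ↔ vtx hn x ≠ vtx hn y ∧
      (((n : ℤ) ∣ x + 1 - y ∨ (n : ℤ) ∣ x + a - y) ∨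
        ((n : ℤ) ∣ y + 1 - x ∨ (n : ℤ) ∣ y + a - x)) := by
  rw [circulantGraph, SimpleGraph.fromRel_adj, vtx_val_add_mod_iff, vtx_val_add_mod_iff,
    vtx_val_add_mod_iff, vtx_val_add_mod_iff, Nat.cast_one]

theorem circulantGraph_adj_vtx_add {n : ℕ} (hn : 0 < n) {e : ℤ} (he : e ∈ circSteps a)
    (hne : ¬ (n : ℤ) ∣ e) (x : ℤ) :
    (circulantGraph n a).Adj (vtx hn x) (vtx hn (x + e)) := by
  rw [circulantGraph_adj_vtx, Ne, vtx_eq_iff]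
  refine ⟨by simpa using hne, ?_⟩
  rcases mem_circSteps.1 he with h | h | h | h <;> subst h <;> simp

theorem period_pos (hk : 2 ≤ k) : 0 < (a + 1) * k := by positivity

theorem not_period_dvd (hk : 2 ≤ k) {t : ℤ} (h0 : t ≠ 0) (h : |t| ≤ 2 * a + 1) :
    ¬ (((a + 1) * k : ℕ) : ℤ) ∣ t := by
  intro hd
  refine h0 (Int.eq_zero_of_abs_lt_dvd hd ?_)
  have : (a + 1) * 2 ≤ (a + 1) * k := Nat.mul_le_mul_left _ hk
  omega

theorem not_period_dvd_step (ha : 5 ≤ a) (hk : 2 ≤ k) {e : ℤ} (he : e ∈ circSteps a) :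
    ¬ (((a + 1) * k : ℕ) : ℤ) ∣ e := by
  rw [mem_circSteps] at he
  exact not_period_dvd hk (by omega) (by rw [abs_le]; omega)

theorem circulantGraph_connected (ha : 5 ≤ a) (hk : 2 ≤ k) :
    (circulantGraph ((a + 1) * k) a).Connected := by
  have hn := period_pos (a := a) hk
  have : Nonempty (Fin ((a + 1) * k)) := ⟨⟨0, hn⟩⟩
  have h : ∀ m : ℕ, (circulantGraph ((a + 1) * k) a).Reachable (vtx hn 0) (vtx hn m) := by
    intro m
    induction m with
    | zero => rfl
    | succ m ih =>
      have h1 : (1 : ℤ) ∈ circSteps a := by simp [mem_circSteps]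
      have := circulantGraph_adj_vtx_add hn h1 (not_period_dvd_step ha hk h1) m
      exact ih.trans (by exact_mod_cast this.reachable)
  refine SimpleGraph.Connected.mk fun u v => ?_
  rw [← vtx_natCast hn u, ← vtx_natCast hn v]
  exact (h _).symm.trans (h _)

theorem dist_vtx_add_mul_le (ha : 5 ≤ a) (hk : 2 ≤ k) {e : ℤ} (he : e ∈ circSteps a) (x : ℤ)
    (m : ℕ) :
    (circulantGraph ((a + 1) * k) a).dist (vtx (period_pos hk) x)
      (vtx (period_pos hk) (x + m * e)) ≤ m := by
  induction m with
  | zero => simp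
  | succ m ih =>
    have h1 := circulantGraph_adj_vtx_add (period_pos hk) he (not_period_dvd_step ha hk he)
      (x + m * e)
    have h2 := (circulantGraph_connected ha hk).dist_triangle (u := vtx (period_pos hk) x)
      (v := vtx (period_pos hk) (x + m * e)) (w := vtx (period_pos hk) (x + m * e + e))
    rw [SimpleGraph.dist_eq_one_iff_adj.2 h1] at h2
    rw [show x + ((m + 1 : ℕ) : ℤ) * e = x + m * e + e by push_cast; ring]
    omega

/-- Moving by `d` residue classes and by `-y` blocks of length `a + 1`. -/
theorem dist_vtx_le (ha : 5 ≤ a) (hk : 2 ≤ k) (z d y : ℤ) :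
    ((circulantGraph ((a + 1) * k) a).dist (vtx (period_pos hk) z)
      (vtx (period_pos hk) (z + d - (a + 1) * y)) : ℤ) ≤ |d - y| + |y| := by
  have hline : ∀ e ∈ circSteps a, ∀ x c : ℤ, ((circulantGraph ((a + 1) * k) a).dist
      (vtx (period_pos hk) x) (vtx (period_pos hk) (x + c * e)) : ℤ) ≤ |c| := by
    intro e he x c
    rcases Int.eq_nat_or_neg c with ⟨m, rfl | rfl⟩
    · have := dist_vtx_add_mul_le ha hk he x m
      rw [Nat.abs_cast]
      exact_mod_cast this
    · have := dist_vtx_add_mul_le ha hk (neg_mem_circSteps he) x m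
      rw [abs_neg, Nat.abs_cast, neg_mul, ← mul_neg]
      exact_mod_cast this
  have h1 := hline 1 (by simp [mem_circSteps]) z (d - y)
  have h2 := hline (-a) (by simp [mem_circSteps]) (z + (d - y) * 1) y
  have h3 := (circulantGraph_connected ha hk).dist_triangle (u := vtx (period_pos hk) z)
    (v := vtx (period_pos hk) (z + (d - y) * 1))
    (w := vtx (period_pos hk) (z + (d - y) * 1 + y * -a))
  rw [show z + d - (a + 1) * y = z + (d - y) * 1 + y * -a by ring]
  omega

theorem dist_le_max (ha : 5 ≤ a) (hk : 2 ≤ k) (u v : Fin ((a + 1) * k)) :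
    (circulantGraph ((a + 1) * k) a).dist u v ≤ max a k := by
  have hn := period_pos (a := a) hk
  rw [← vtx_natCast hn u, ← vtx_natCast hn v]
  generalize (u.val : ℤ) = z
  generalize (v.val : ℤ) = w
  obtain ⟨d, q, hd0, hda, hw⟩ : ∃ d q : ℤ, 0 ≤ d ∧ d ≤ a ∧ w - z = d + (a + 1) * q := by
    refine ⟨(w - z) % (a + 1), (w - z) / (a + 1), Int.emod_nonneg _ (by omega), ?_,
      (Int.emod_add_mul_ediv _ _).symm⟩
    have := Int.emod_lt_of_pos (w - z) (by omega : (0 : ℤ) < a + 1)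
    omega
  have main : ∀ e : ℤ, ∃ y : ℤ, -e ≤ y ∧ y ≤ k - 1 - e ∧
      vtx hn w = vtx hn (z + d - (a + 1) * y) := by
    intro e
    refine ⟨(-q + e) % k - e, ?_, ?_, ?_⟩
    · have := Int.emod_nonneg (-q + e) (by omega : (k : ℤ) ≠ 0)
      omega
    · have := Int.emod_lt_of_pos (-q + e) (by omega : (0 : ℤ) < k)
      omega
    · rw [vtx_eq_iff]
      have h := Int.emod_add_mul_ediv (-q + e) k
      refine ⟨-((-q + e) / k), ?_⟩
      push_cast
      linear_combination hw + (a + 1) * h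
  rcases le_or_gt ((k : ℤ) - 1) d with h | h
  · obtain ⟨y, hy0, hy1, hy⟩ := main 0
    have := dist_vtx_le ha hk z d y
    rw [← hy, abs_of_nonneg (by omega : 0 ≤ d - y), abs_of_nonneg (by omega : 0 ≤ y)] at this
    omega
  · obtain ⟨y, hy0, hy1, hy⟩ := main ((k - 1 - d) / 2)
    have := dist_vtx_le ha hk z d y
    rw [← hy] at this
    rcases abs_cases (d - y) with h1 | h1 <;> rcases abs_cases y with h2 | h2 <;> omega

/-! ### Independent sets -/

/-- A family of vertices whose residue classes modulo `a + 1` have even differences less than `a`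
is independent. -/
theorem exists_indep_of_coords (hk : 2 ≤ k) {ι : Type*} [DecidableEq ι] (s : Finset ι) (z : ℤ)
    (d y : ι → ℤ)
    (heven : ∀ i ∈ s, ∀ j ∈ s, Even (d i - d j)) (hlt : ∀ i ∈ s, ∀ j ∈ s, d i - d j < a)
    (hinj : ∀ i ∈ s, ∀ j ∈ s, d i = d j → (k : ℤ) ∣ y i - y j → i = j) :
    ∃ I : Finset (Fin ((a + 1) * k)), I.card = s.card ∧
      (∀ u ∈ I, ∀ v ∈ I, ¬ (circulantGraph ((a + 1) * k) a).Adj u v) ∧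
      ∀ u ∈ I, ∃ i ∈ s, u = vtx (period_pos hk) (z + d i - (a + 1) * y i) := by
  have small : ∀ {t : ℤ}, ((a : ℤ) + 1) ∣ t → |t| ≤ a → t = 0 := fun hd h =>
    Int.eq_zero_of_abs_lt_dvd hd (by omega)
  have hdvd : ((a : ℤ) + 1) ∣ (((a + 1) * k : ℕ) : ℤ) := ⟨k, by push_cast; ring⟩
  refine ⟨s.image fun i => vtx (period_pos hk) (z + d i - (a + 1) * y i), ?_, ?_, ?_⟩
  · refine Finset.card_image_of_injOn fun i hi j hj hij => ?_
    rw [vtx_eq_iff] at hij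
    have h1 : d i - d j = 0 := by
      refine small ?_ (abs_le.2 ⟨?_, ?_⟩)
      · obtain ⟨c, hc⟩ := hdvd.trans hij
        exact ⟨c + y i - y j, by linear_combination hc⟩
      · linarith [hlt j hj i hi]
      · linarith [hlt i hi j hj]
    refine hinj i hi j hj (by omega) ?_
    obtain ⟨c, hc⟩ := hij
    refine ⟨-c, ?_⟩
    have hne : (a : ℤ) + 1 ≠ 0 := by omega
    refine mul_left_cancel₀ hne ?_
    push_cast at hc
    linear_combination h1 - hc
  · intro u hu v hv hadj
    obtain ⟨i, hi, rfl⟩ := Finset.mem_image.1 hu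
    obtain ⟨j, hj, rfl⟩ := Finset.mem_image.1 hv
    rw [circulantGraph_adj_vtx] at hadj
    have hij := hlt i hi j hj
    have hji := hlt j hj i hi
    obtain ⟨c, hc⟩ := heven i hi j hj
    have key : ∀ t m : ℤ, (((a + 1) * k : ℕ) : ℤ) ∣ t → (t = d i - d j + 1 + (a + 1) * m ∨
        t = d i - d j - 1 + (a + 1) * m) → False := by
      intro t m ht h
      rcases h with h | h
      · have := small (t := d i - d j + 1) (by
          obtain ⟨b, hb⟩ := hdvd.trans ht
          exact ⟨b - m, by linear_combination hb - h⟩) (abs_le.2 ⟨by omega, by omega⟩)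
        omega
      · have := small (t := d i - d j - 1) (by
          obtain ⟨b, hb⟩ := hdvd.trans ht
          exact ⟨b - m, by linear_combination hb - h⟩) (abs_le.2 ⟨by omega, by omega⟩)
        omega
    rcases hadj.2 with (h | h) | h | h
    · exact key _ (y j - y i) h (Or.inl (by ring))
    · exact key _ (y j - y i + 1) h (Or.inr (by ring))
    · exact key _ (y j - y i) ((dvd_neg).2 h) (Or.inr (by ring))
    · exact key _ (y j - y i - 1) ((dvd_neg).2 h) (Or.inl (by ring))
  · intro u hu
    obtain ⟨i, hi, rfl⟩ := Finset.mem_image.1 hu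
    exact ⟨i, hi, rfl⟩

theorem exists_indep_card (hk : 2 ≤ k) :
    ∃ I : Finset (Fin ((a + 1) * k)),
      (∀ u ∈ I, ∀ v ∈ I, ¬ (circulantGraph ((a + 1) * k) a).Adj u v) ∧
      I.card = (a + 1) / 2 * k := by
  obtain ⟨I, hc, hI, -⟩ := exists_indep_of_coords (a := a) hk
    (Finset.range ((a + 1) / 2) ×ˢ Finset.range k) 0 (fun p => 2 * (p.1 : ℤ)) (fun p => (p.2 : ℤ))
    (fun p _ q _ => ⟨p.1 - q.1, by ring⟩)
    (fun p hp q hq => by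
      simp only [Finset.mem_product, Finset.mem_range] at hp hq
      omega)
    (fun p hp q hq h1 h2 => by
      simp only [Finset.mem_product, Finset.mem_range] at hp hq
      have := Int.eq_zero_of_abs_lt_dvd h2 (by rw [abs_lt]; omega)
      exact Prod.ext (by omega) (by omega))
  exact ⟨I, hI, by simpa using hc⟩

/-- A ball of radius `ρ ≥ 1` contains an independent set of size `2 * ρ + 2`, unless it is
too large for the graph. -/
theorem exists_indep_in_ball (ha : 5 ≤ a) (hk : 2 ≤ k) (u : Fin ((a + 1) * k)) {ρ : ℕ}
    (hρ : 1 ≤ ρ) (hsize : ρ < k ∨ 2 * ρ < a) :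
    ∃ I : Finset (Fin ((a + 1) * k)), I.card = (ρ + 1) * 2 ∧
      (∀ v ∈ I, ∀ w ∈ I, ¬ (circulantGraph ((a + 1) * k) a).Adj v w) ∧
      ∀ v ∈ I, (circulantGraph ((a + 1) * k) a).dist u v ≤ ρ := by
  obtain ⟨z, hu⟩ : ∃ z : ℤ, u = vtx (period_pos hk) z := ⟨u.val, (vtx_natCast _ u).symm⟩
  have fin : ∀ d y : ℕ × ℕ → ℤ,
      (∀ p ∈ Finset.range (ρ + 1) ×ˢ Finset.range 2, |d p - y p| + |y p| ≤ ρ) →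
      (∃ I : Finset (Fin ((a + 1) * k)),
        I.card = (Finset.range (ρ + 1) ×ˢ Finset.range 2).card ∧
        (∀ v ∈ I, ∀ w ∈ I, ¬ (circulantGraph ((a + 1) * k) a).Adj v w) ∧
        ∀ v ∈ I, ∃ p ∈ Finset.range (ρ + 1) ×ˢ Finset.range 2,
          v = vtx (period_pos hk) (z + d p - (a + 1) * y p)) →
      ∃ I : Finset (Fin ((a + 1) * k)), I.card = (ρ + 1) * 2 ∧
        (∀ v ∈ I, ∀ w ∈ I, ¬ (circulantGraph ((a + 1) * k) a).Adj v w) ∧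
        ∀ v ∈ I, (circulantGraph ((a + 1) * k) a).dist u v ≤ ρ := by
    rintro d y hdy ⟨I, hc, hI, hmem⟩
    refine ⟨I, by simpa using hc, hI, fun v hv => ?_⟩
    obtain ⟨p, hp, rfl⟩ := hmem v hv
    have h1 := dist_vtx_le ha hk z (d p) (y p)
    rw [← hu] at h1
    have h2 := hdy p hp
    omega
  rcases hsize with h | h
  · obtain ⟨c, t, ht, hct⟩ : ∃ c t : ℤ, (t = 0 ∨ t = 1) ∧ (ρ : ℤ) = 2 * c + t :=
      ⟨ρ / 2, ρ % 2, by omega, by omega⟩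
    refine fin (fun p => 2 * p.2 - t) (fun p => p.2 - p.1 + c) ?_
      (exists_indep_of_coords hk _ z _ _ ?_ ?_ ?_)
    · intro p hp
      simp only [Finset.mem_product, Finset.mem_range] at hp
      rcases abs_cases (2 * (p.2 : ℤ) - t - (p.2 - p.1 + c)) with h1 | h1 <;>
        rcases abs_cases ((p.2 : ℤ) - p.1 + c) with h2 | h2 <;> omega
    · exact fun p _ q _ => ⟨p.2 - q.2, by ring⟩
    · intro p hp q hq
      simp only [Finset.mem_product, Finset.mem_range] at hp hq
      omega
    · intro p hp q hq h1 h2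
      simp only [Finset.mem_product, Finset.mem_range] at hp hq
      have := Int.eq_zero_of_abs_lt_dvd h2 (by rw [abs_lt]; omega)
      exact Prod.ext (by omega) (by omega)
  · refine fin (fun p => 2 * p.1 - ρ) (fun p => p.1 - p.2) ?_
      (exists_indep_of_coords hk _ z _ _ ?_ ?_ ?_)
    · intro p hp
      simp only [Finset.mem_product, Finset.mem_range] at hp
      rcases abs_cases (2 * (p.1 : ℤ) - ρ - (p.1 - p.2)) with h1 | h1 <;>
        rcases abs_cases ((p.1 : ℤ) - p.2) with h2 | h2 <;> omega
    · exact fun p _ q _ => ⟨p.1 - q.1, by ring⟩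
    · intro p hp q hq
      simp only [Finset.mem_product, Finset.mem_range] at hp hq
      omega
    · intro p hp q hq h1 h2
      simp only [Finset.mem_product, Finset.mem_range] at hp hq
      have := Int.eq_zero_of_abs_lt_dvd h2 (by rw [abs_lt]; omega)
      exact Prod.ext (by omega) (by omega)

/-! ### Broadcasts -/

theorem exists_indep_replacement (ha : 5 ≤ a) (hk : 2 ≤ k) (u : Fin ((a + 1) * k)) {r : ℕ}
    (hr : r ≤ eccent (circulantGraph ((a + 1) * k) a) u) :
    ∃ I : Finset (Fin ((a + 1) * k)), r ≤ (if r = 2 then 2 else 1) * I.card ∧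
      (r = 2 → I = {u}) ∧
      (∀ v ∈ I, ∀ w ∈ I, ¬ (circulantGraph ((a + 1) * k) a).Adj v w) ∧
      ∀ v ∈ I, (circulantGraph ((a + 1) * k) a).dist u v ≤ (r - 1) / 2 := by
  rcases Nat.lt_or_ge r 3 with h | h
  · refine ⟨{u}, ?_, fun _ => rfl, by simp, by simp⟩
    rw [Finset.card_singleton]
    split_ifs <;> omega
  · have hmax : r ≤ max a k := hr.trans (Finset.sup_le fun v _ => dist_le_max ha hk u v)
    obtain ⟨I, hc, hI, hd⟩ := exists_indep_in_ball ha hk u (ρ := (r - 1) / 2) (by omega) (by omega)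
    refine ⟨I, ?_, by omega, hI, hd⟩
    rw [if_neg (by omega), hc]
    omega

/-- Every independent broadcast can be replaced, without loss of cost, by one with values
at most two. -/
theorem exists_value_le_two (ha : 5 ≤ a) (hk : 2 ≤ k) {f : Fin ((a + 1) * k) → ℕ}
    (hf : IsIndepBroadcast (circulantGraph ((a + 1) * k) a) f) :
    ∃ g : Fin ((a + 1) * k) → ℕ, ∑ v, f v ≤ ∑ v, g v ∧ (∀ v, g v ≤ 2) ∧
      ∀ v w, v ≠ w → 0 < g v → 0 < g w →
        max (g v) (g w) < (circulantGraph ((a + 1) * k) a).dist v w := by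
  classical
  have hconn := circulantGraph_connected ha hk
  choose I hcard hone hindep hdist using fun u => exists_indep_replacement ha hk u (hf.1 u)
  have hsep : ∀ u u' v v', u ≠ u' → 0 < f u → 0 < f u' → v ∈ I u → v' ∈ I u' →
      max (f u) (f u') < (f u - 1) / 2 + (f u' - 1) / 2 +
        (circulantGraph ((a + 1) * k) a).dist v v' := by
    intro u u' v v' hne h0 h0' hv hv'
    have h1 := hf.2 u u' hne h0 h0'
    have h2 := hconn.dist_triangle (u := u) (v := v) (w := u')
    have h3 := hconn.dist_triangle (u := v) (v := v') (w := u')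
    have h4 := hdist u v hv
    have h5 := hdist u' v' hv'
    rw [SimpleGraph.dist_comm] at h5
    omega
  set c : Fin ((a + 1) * k) → ℕ := fun u => if f u = 2 then 2 else 1 with hc
  set g : Fin ((a + 1) * k) → ℕ := fun v => ∑ u, if 0 < f u ∧ v ∈ I u then c u else 0 with hg
  have hval : ∀ v, 0 < g v → ∃ u, 0 < f u ∧ v ∈ I u ∧ g v = c u := by
    intro v hv
    obtain ⟨u, -, hu⟩ := Finset.exists_ne_zero_of_sum_ne_zero hv.ne'
    have hu' : 0 < f u ∧ v ∈ I u := by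
      by_contra hcon
      exact hu (if_neg hcon)
    refine ⟨u, hu'.1, hu'.2, ?_⟩
    rw [hg]
    refine (Finset.sum_eq_single u (fun u' _ hne => if_neg ?_) (by simp)).trans (if_pos hu')
    rintro ⟨h0, hm⟩
    have := hsep u' u v v hne h0 hu'.1 hm hu'.2
    rw [SimpleGraph.dist_self] at this
    omega
  have hc2 : ∀ u, c u ≤ 2 := fun u => by simp only [hc]; split_ifs <;> omega
  refine ⟨g, ?_, ?_, ?_⟩
  · rw [hg, Finset.sum_comm]
    refine Finset.sum_le_sum fun u _ => ?_
    rcases Nat.eq_zero_or_pos (f u) with h | h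
    · omega
    · simp only [h, true_and]
      rw [← Finset.sum_filter, Finset.sum_const, smul_eq_mul, mul_comm, Finset.filter_mem_eq_inter,
        Finset.univ_inter]
      exact hcard u
  · intro v
    rcases Nat.eq_zero_or_pos (g v) with h | h
    · omega
    · obtain ⟨u, -, -, hu⟩ := hval v h
      rw [hu]
      exact hc2 u
  · intro v w hne hv hw
    obtain ⟨u, h0, hm, hu⟩ := hval v hv
    obtain ⟨u', h0', hm', hu'⟩ := hval w hw
    rw [hu, hu']
    by_cases huu : u = u'
    · subst huu
      have hf2 : f u ≠ 2 := by
        intro h2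
        rw [hone u h2, Finset.mem_singleton] at hm hm'
        exact hne (hm.trans hm'.symm)
      have h1 := hindep u v hm w hm'
      rw [← SimpleGraph.dist_eq_one_iff_adj] at h1
      have h2 := hconn.pos_dist_of_ne hne
      simp only [hc, if_neg hf2]
      omega
    · have := hsep u u' v w huu h0 h0' hm hm'
      simp only [hc]
      split_ifs <;> omega

theorem sum_le_of_isIndepBroadcast (ha : 5 ≤ a) (hk : 2 ≤ k) {f : Fin ((a + 1) * k) → ℕ}
    (hf : IsIndepBroadcast (circulantGraph ((a + 1) * k) a) f) :
    ∑ v, f v ≤ (a + 1) / 2 * k := by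
  obtain ⟨g, hfg, hle, hsep⟩ := exists_value_le_two ha hk hf
  refine hfg.trans ?_
  have hn := period_pos (a := a) hk
  have hsum : ∑ v, g v = ∑ i ∈ Finset.range ((a + 1) * k), g (vtx hn (i : ℤ)) := by
    rw [← Fin.sum_univ_eq_sum_range (fun i => g (vtx hn (i : ℤ)))]
    simp only [vtx_natCast]
  have hstep : ∀ x, ∀ e ∈ circSteps a, (circulantGraph ((a + 1) * k) a).dist (vtx hn x)
      (vtx hn (x + e)) = 1 := fun x e he =>
    SimpleGraph.dist_eq_one_iff_adj.2
      (circulantGraph_adj_vtx_add hn he (not_period_dvd_step ha hk he) x)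
  rw [hsum]
  refine sum_range_le_of_value_le_two (g := fun x => g (vtx hn x)) ha k
    (fun x => by rw [vtx_add_period]) (fun x => hle _) ?_ ?_
  · intro x e he hx
    by_contra h
    have h1 := hstep x e he
    have hne : vtx hn x ≠ vtx hn (x + e) := by
      intro heq
      rw [← heq, SimpleGraph.dist_self] at h1
      omega
    have := hsep _ _ hne hx (Nat.pos_of_ne_zero h)
    omega
  · intro x e he e' he' hee hx
    by_contra h
    have hne : vtx hn x ≠ vtx hn (x + e + e') := by
      rw [Ne, vtx_eq_iff]
      rw [mem_circSteps] at he he'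
      exact not_period_dvd hk (by omega) (by rw [abs_le]; omega)
    have h1 := hstep x e he
    have h2 := hstep (x + e) e' he'
    have h3 := (circulantGraph_connected ha hk).dist_triangle (u := vtx hn x)
      (v := vtx hn (x + e)) (w := vtx hn (x + e + e'))
    have := hsep _ _ hne (by omega) (Nat.pos_of_ne_zero h)
    omega

theorem isIndepBroadcast_indicator (ha : 5 ≤ a) (hk : 2 ≤ k) {s : Finset (Fin ((a + 1) * k))}
    (hs : ∀ u ∈ s, ∀ v ∈ s, ¬ (circulantGraph ((a + 1) * k) a).Adj u v) :
    IsIndepBroadcast (circulantGraph ((a + 1) * k) a) (fun v => if v ∈ s then 1 else 0) := by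
  have hn := period_pos (a := a) hk
  have hconn := circulantGraph_connected ha hk
  constructor
  · intro v
    have h1 : (1 : ℤ) ∈ circSteps a := by simp [mem_circSteps]
    have hadj := circulantGraph_adj_vtx_add hn h1 (not_period_dvd_step ha hk h1) v.val
    rw [vtx_natCast, ← SimpleGraph.dist_eq_one_iff_adj] at hadj
    have h2 : (circulantGraph ((a + 1) * k) a).dist v (vtx hn (v.val + 1))
        ≤ eccent (circulantGraph ((a + 1) * k) a) v :=
      Finset.le_sup (f := fun u => (circulantGraph ((a + 1) * k) a).dist v u)
        (Finset.mem_univ _)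
    dsimp only
    split_ifs <;> omega
  · intro u v hne hu hv
    have hus : u ∈ s := by
      by_contra h
      simp [h] at hu
    have hvs : v ∈ s := by
      by_contra h
      simp [h] at hv
    have h1 := hs u hus v hvs
    rw [← SimpleGraph.dist_eq_one_iff_adj] at h1
    have h2 := hconn.pos_dist_of_ne hne
    simp only [hus, hvs, if_true]
    omega

theorem betaB_and_alphaNum_eq (ha : 5 ≤ a) (hk : 2 ≤ k) :
    betaB (circulantGraph ((a + 1) * k) a) = (a + 1) / 2 * k ∧
    alphaNum (circulantGraph ((a + 1) * k) a) = (a + 1) / 2 * k := by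
  have hbeta : IsGreatest {m | ∃ f : Fin ((a + 1) * k) → ℕ,
      IsIndepBroadcast (circulantGraph ((a + 1) * k) a) f ∧ ∑ v, f v = m} ((a + 1) / 2 * k) := by
    obtain ⟨s, hs, hc⟩ := exists_indep_card (a := a) hk
    refine ⟨⟨_, isIndepBroadcast_indicator ha hk hs, by simpa using hc⟩, ?_⟩
    rintro m ⟨f, hf, rfl⟩
    exact sum_le_of_isIndepBroadcast ha hk hf
  have halpha : IsGreatest {m | ∃ s : Finset (Fin ((a + 1) * k)),
      (∀ u ∈ s, ∀ v ∈ s, ¬ (circulantGraph ((a + 1) * k) a).Adj u v) ∧ s.card = m}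
      ((a + 1) / 2 * k) := by
    refine ⟨exists_indep_card hk, ?_⟩
    rintro m ⟨s, hs, rfl⟩
    simpa using sum_le_of_isIndepBroadcast ha hk (isIndepBroadcast_indicator ha hk hs)
  exact ⟨hbeta.csSup_eq, halpha.csSup_eq⟩

end Circulant

theorem stmt19 (a k : ℕ) (ha : 5 ≤ a) (hk : 2 ≤ k) :
    betaB (circulantGraph ((a + 1) * k) a) = alphaNum (circulantGraph ((a + 1) * k) a) ∧
    (Even a → betaB (circulantGraph ((a + 1) * k) a) = a * k / 2) ∧
    (Odd a → betaB (circulantGraph ((a + 1) * k) a) = (a + 1) * k / 2) := by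
  obtain ⟨hb, hα⟩ := betaB_and_alphaNum_eq ha hk
  refine ⟨hb.trans hα.symm, fun h => hb.trans ?_, fun h => hb.trans ?_⟩
  · obtain ⟨m, rfl⟩ := h
    rw [show (m + m + 1) / 2 = m by omega, show (m + m) * k = 2 * (m * k) by ring]
    omega
  · obtain ⟨m, rfl⟩ := h
    rw [show (2 * m + 1 + 1) / 2 = m + 1 by omega,
      show (2 * m + 1 + 1) * k = 2 * ((m + 1) * k) by ring]
    omega
end
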